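/- arXiv:2510.23471 — 3 statements merged into one kernel-verified Lean document; each statement's English description precedes it below -/
import Mathlib

section
/- The piecewise-constant map q̄ defined by q̄(v) = μ_a for v ∈ R_a (on regions with P_a > 0, and q̄(v) = v on regions with P_a = 0) belongs to Q_dec, and it minimizes the adversarial value: for every q ∈ Q_dec, ∫ val(q(v)) dν(v) ≥ Σ_{a : P_a>0} P_a · val(μ_a) = ∫ val(q̄(v)) dν(v). -/
/-!
The lower bound is Jensen's inequality, cell by cell. Membership in `Qdec` says exactly that
`q` and the identity have the same integral over each cell `R a`, so an affine utility of `q`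
integrates over `R a` to `P_a` times its value at the mean `μ_a`. Bounding `val ∘ q` below by the
single utility that is optimal at `μ_a` gives `P_a * val μ_a ≤ ∫_{R a} val ∘ q`
(`measure_mul_val_binMean_le`), and summing over the cells (`integral_eq_sum_cells`) gives the
bound. The map `q̄` is constant on each cell of positive mass, where the integrals are immediate;
it takes values in the cube because the cube is closed and convex
(`binMean_mem_cube`). All integrability comes from compactness of the cube
(`integrable_comp_of_cube`).
-/

open MeasureTheory

noncomputable section

/-- The cube `[0,1]^d`. -/
def cube (d : ℕ) : Set (Fin d → ℝ) := Set.Icc 0 1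

/-- Euclidean dot product on `ℝ^d`. -/
def dot {d : ℕ} (x y : Fin d → ℝ) : ℝ := ∑ i, x i * y i

/-- Affine utility `u(a,p) = r_a ⬝ p + c_a`. -/
def util {d : ℕ} {A : Type*} (r : A → Fin d → ℝ) (c : A → ℝ)
    (a : A) (p : Fin d → ℝ) : ℝ := dot (r a) p + c a

/-- The value function `val(p) = max_{a ∈ A} u(a,p)`. -/
def val {d : ℕ} {A : Type*} [Fintype A] [Nonempty A]
    (r : A → Fin d → ℝ) (c : A → ℝ) (p : Fin d → ℝ) : ℝ :=
  Finset.univ.sup' Finset.univ_nonempty fun a => util r c a p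

/-- The decision-calibration consistency set: measurable `q : [0,1]^d → [0,1]^d` with
`∫_{R_a} (q(v) − v) dν(v) = 0` for every action `a`. -/
def Qdec {d : ℕ} {A : Type*} (ν : Measure (Fin d → ℝ)) (R : A → Set (Fin d → ℝ)) :
    Set ((Fin d → ℝ) → (Fin d → ℝ)) :=
  {q | Measurable q ∧ (∀ v ∈ cube d, q v ∈ cube d) ∧
    ∀ a : A, ∫ v in R a, (q v - v) ∂ν = 0}

/-- Conditional mean of the identity over a set `S`: `(1/ν(S)) ∫_S v dν(v)`. -/
def binMean {d : ℕ} (ν : Measure (Fin d → ℝ)) (S : Set (Fin d → ℝ)) : Fin d → ℝ :=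
  (ν S).toReal⁻¹ • ∫ v in S, v ∂ν

/-- The dot product with a fixed vector, as a continuous linear functional. -/
def dotCLM {d : ℕ} (x : Fin d → ℝ) : (Fin d → ℝ) →L[ℝ] ℝ :=
  ∑ i, x i • ContinuousLinearMap.proj (R := ℝ) (φ := fun _ : Fin d => ℝ) i

lemma dotCLM_apply {d : ℕ} (x y : Fin d → ℝ) : dotCLM x y = dot x y := by
  simp [dotCLM, dot]

lemma continuous_util {d : ℕ} {A : Type*} (r : A → Fin d → ℝ) (c : A → ℝ) (a : A) :
    Continuous (util r c a) := by
  unfold util dot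
  fun_prop

lemma continuous_val {d : ℕ} {A : Type*} [Fintype A] [Nonempty A]
    (r : A → Fin d → ℝ) (c : A → ℝ) : Continuous (val r c) := by
  unfold val
  exact Continuous.finset_sup'_apply _ fun a _ => continuous_util r c a

/-- A continuous function of a measurable map into the compact cube is bounded,
hence integrable. -/
lemma integrable_comp_of_cube {d : ℕ} {E : Type*} [NormedAddCommGroup E]
    [MeasurableSpace E] [BorelSpace E] [SecondCountableTopology E]
    {ν : Measure (Fin d → ℝ)} [IsProbabilityMeasure ν] (hνsupp : ν (cube d)ᶜ = 0)
    {g : (Fin d → ℝ) → E} (hg : Continuous g) {q : (Fin d → ℝ) → (Fin d → ℝ)}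
    (hq : Measurable q) (hqc : ∀ v ∈ cube d, q v ∈ cube d) :
    Integrable (fun v => g (q v)) ν := by
  have hK : IsCompact (cube d) := isCompact_Icc
  obtain ⟨C, hC⟩ := hK.exists_bound_of_continuousOn hg.continuousOn
  refine Integrable.of_bound (hg.measurable.comp hq).aestronglyMeasurable C ?_
  have h : ∀ᵐ v ∂ν, v ∈ cube d := hνsupp
  filter_upwards [h] with v hv using hC _ (hqc v hv)

lemma integral_eq_sum_cells {d : ℕ} {A : Type*} [Fintype A]
    {ν : Measure (Fin d → ℝ)} (hνsupp : ν (cube d)ᶜ = 0)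
    {R : A → Set (Fin d → ℝ)} (hRmeas : ∀ a, MeasurableSet (R a))
    (hRdisj : ∀ a a' : A, a ≠ a' → Disjoint (R a) (R a'))
    (hRcover : (⋃ a : A, R a) = cube d)
    {f : (Fin d → ℝ) → ℝ} (hf : Integrable f ν) :
    ∫ v, f v ∂ν = ∑ a, ∫ v in R a, f v ∂ν := by
  have h : ∀ᵐ v ∂ν, v ∈ cube d := hνsupp
  rw [← integral_iUnion_fintype hRmeas (fun a a' h => hRdisj a a' h)
    (fun a => hf.integrableOn), hRcover, Measure.restrict_eq_self_of_ae_mem h]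

lemma binMean_mem_cube {d : ℕ} {ν : Measure (Fin d → ℝ)} [IsProbabilityMeasure ν]
    (hνsupp : ν (cube d)ᶜ = 0) {S : Set (Fin d → ℝ)} (hS : ν S ≠ 0) :
    binMean ν S ∈ cube d := by
  have h : ∀ᵐ v ∂ν, v ∈ cube d := hνsupp
  have hi : Integrable (fun v : Fin d → ℝ => v) ν :=
    integrable_comp_of_cube hνsupp continuous_id measurable_id fun _ hv => hv
  have := Convex.set_average_mem (convex_Icc (0 : Fin d → ℝ) 1) isClosed_Icc hS
    (measure_ne_top ν S) (ae_restrict_of_ae h) hi.integrableOn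
  rwa [setAverage_eq] at this

lemma measure_smul_binMean {d : ℕ} {ν : Measure (Fin d → ℝ)} [IsProbabilityMeasure ν]
    {S : Set (Fin d → ℝ)} (hS : ν S ≠ 0) :
    (ν S).toReal • binMean ν S = ∫ v in S, v ∂ν :=
  smul_inv_smul₀ (ENNReal.toReal_ne_zero.2 ⟨hS, measure_ne_top ν S⟩) _

/-- Jensen's inequality on one cell. -/
lemma measure_mul_val_binMean_le {d : ℕ} {A : Type*} [Fintype A] [Nonempty A]
    {ν : Measure (Fin d → ℝ)} [IsProbabilityMeasure ν] (hνsupp : ν (cube d)ᶜ = 0)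
    (r : A → Fin d → ℝ) (c : A → ℝ) {S : Set (Fin d → ℝ)}
    {q : (Fin d → ℝ) → (Fin d → ℝ)} (hq : Measurable q)
    (hqc : ∀ v ∈ cube d, q v ∈ cube d) (hqS : ∫ v in S, (q v - v) ∂ν = 0) :
    (ν S).toReal * val r c (binMean ν S) ≤ ∫ v in S, val r c (q v) ∂ν := by
  by_cases hS : ν S = 0
  · simp [hS, Measure.restrict_eq_zero.2 hS]
  have hid : Integrable (fun v : Fin d → ℝ => v) ν :=
    integrable_comp_of_cube hνsupp continuous_id measurable_id fun _ hv => hv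
  have hqi : Integrable q ν := integrable_comp_of_cube hνsupp continuous_id hq hqc
  -- `b` is an optimal action at the mean of the cell.
  obtain ⟨b, -, hb⟩ := Finset.exists_mem_eq_sup' (Finset.univ_nonempty (α := A))
    fun a => util r c a (binMean ν S)
  have hmean : ∫ v in S, q v ∂ν = (ν S).toReal • binMean ν S := by
    rw [measure_smul_binMean hS]
    rwa [integral_sub hqi.integrableOn hid.integrableOn, sub_eq_zero] at hqS
  calc (ν S).toReal * val r c (binMean ν S)
      = (ν S).toReal * util r c b (binMean ν S) := by rw [val, hb]
    _ = ∫ v in S, util r c b (q v) ∂ν := by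
        simp only [util, ← dotCLM_apply]
        rw [integral_add ((dotCLM (r b)).integrable_comp hqi).integrableOn
          (integrable_const _), (dotCLM (r b)).integral_comp_comm hqi.integrableOn, hmean]
        simp [Measure.real, mul_add]
    _ ≤ ∫ v in S, val r c (q v) ∂ν := by
        refine integral_mono
          (integrable_comp_of_cube hνsupp (continuous_util r c b) hq hqc).integrableOn
          (integrable_comp_of_cube hνsupp (continuous_val r c) hq hqc).integrableOn
          fun v => ?_
        exact Finset.le_sup' (fun a => util r c a (q v)) (Finset.mem_univ b)

/-- the piecewise-constant map `q̄` with `q̄(v) = μ_a` on regions with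
`P_a = ν(R_a) > 0` and `q̄(v) = v` elsewhere belongs to `Q_dec` and minimizes the
adversarial value: for every `q ∈ Q_dec`,
`∫ val(q(v)) dν ≥ Σ_a P_a · val(μ_a) = ∫ val(q̄(v)) dν`
(the terms with `P_a = 0` vanish from the sum). -/
theorem piecewise_mean_minimizes_adversarial_value {d : ℕ} {A : Type*}
    [Fintype A] [Nonempty A]
    (ν : Measure (Fin d → ℝ)) [IsProbabilityMeasure ν]
    (hνsupp : ν (cube d)ᶜ = 0)
    (r : A → Fin d → ℝ) (c : A → ℝ)
    (R : A → Set (Fin d → ℝ))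
    (hRmeas : ∀ a, MeasurableSet (R a))
    (hRbest : ∀ a, ∀ v ∈ R a, ∀ a' : A, util r c a' v ≤ util r c a v)
    (hRdisj : ∀ a a' : A, a ≠ a' → Disjoint (R a) (R a'))
    (hRcover : (⋃ a : A, R a) = cube d)
    (qbar : (Fin d → ℝ) → (Fin d → ℝ))
    (hqbar_pos : ∀ a, 0 < ν (R a) → ∀ v ∈ R a, qbar v = binMean ν (R a))
    (hqbar_id : ∀ v, (∀ a, v ∈ R a → ν (R a) = 0) → qbar v = v) :
    qbar ∈ Qdec ν R ∧
    (∀ q ∈ Qdec ν R,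
      (∑ a : A, (ν (R a)).toReal * val r c (binMean ν (R a)))
        ≤ ∫ v, val r c (q v) ∂ν) ∧
    (∫ v, val r c (qbar v) ∂ν)
      = ∑ a : A, (ν (R a)).toReal * val r c (binMean ν (R a)) := by
  classical
  have hnull : ∀ a, ν (R a) = 0 → ∀ v ∈ R a, qbar v = v := by
    intro a ha v hv
    refine hqbar_id v fun a' hv' => ?_
    by_cases h : a = a'
    · exact h ▸ ha
    · exact (Set.disjoint_left.1 (hRdisj a a' h) hv hv').elim
  have hout : ∀ v ∉ cube d, qbar v = v := fun v hv =>
    hqbar_id v fun a hva => (hv (hRcover ▸ Set.mem_iUnion.2 ⟨a, hva⟩)).elim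
  have hcell : ∀ v ∈ cube d, ∃ a, v ∈ R a := fun v hv => by
    rw [← hRcover] at hv
    exact Set.mem_iUnion.1 hv
  have hcube : MeasurableSet (cube d) := measurableSet_Icc
  have hmeas : Measurable qbar := by
    intro S hS
    -- `g a` is the measurable map that `qbar` agrees with on `R a`.
    let g : A → (Fin d → ℝ) → (Fin d → ℝ) := fun a =>
      if ν (R a) = 0 then id else fun _ => binMean ν (R a)
    have hgm : ∀ a, Measurable (g a) := fun a => by
      by_cases h : ν (R a) = 0
      · simpa [g, h] using measurable_id
      · simp [g, h]
    have hg : ∀ a, ∀ v ∈ R a, qbar v = g a v := fun a v hv => by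
      by_cases h : ν (R a) = 0
      · simpa [g, h] using hnull a h v hv
      · simpa [g, h] using hqbar_pos a (pos_iff_ne_zero.2 h) v hv
    have heq : qbar ⁻¹' S = (⋃ a, R a ∩ g a ⁻¹' S) ∪ ((cube d)ᶜ ∩ S) := by
      ext v
      simp only [Set.mem_preimage, Set.mem_union, Set.mem_iUnion, Set.mem_inter_iff,
        Set.mem_compl_iff]
      constructor
      · intro h
        by_cases hv : v ∈ cube d
        · obtain ⟨a, ha⟩ := hcell v hv
          exact Or.inl ⟨a, ha, hg a v ha ▸ h⟩
        · exact Or.inr ⟨hv, hout v hv ▸ h⟩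
      · rintro (⟨a, ha, h⟩ | ⟨hv, h⟩)
        · rwa [hg a v ha]
        · rwa [hout v hv]
    rw [heq]
    exact (MeasurableSet.iUnion fun a => (hRmeas a).inter (hgm a hS)).union
      (hcube.compl.inter hS)
  have hmaps : ∀ v ∈ cube d, qbar v ∈ cube d := by
    intro v hv
    obtain ⟨a, ha⟩ := hcell v hv
    by_cases h : ν (R a) = 0
    · rwa [hnull a h v ha]
    · rw [hqbar_pos a (pos_iff_ne_zero.2 h) v ha]
      exact binMean_mem_cube hνsupp h
  refine ⟨⟨hmeas, hmaps, fun a => ?_⟩, fun q hq => ?_, ?_⟩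
  · by_cases h : ν (R a) = 0
    · simp [Measure.restrict_eq_zero.2 h]
    · have hid : Integrable (fun v : Fin d → ℝ => v) ν :=
        integrable_comp_of_cube hνsupp continuous_id measurable_id fun _ hv => hv
      rw [setIntegral_congr_fun (hRmeas a)
        (g := fun v => binMean ν (R a) - v) fun v hv => by
          simp only [hqbar_pos a (pos_iff_ne_zero.2 h) v hv],
        integral_sub (integrable_const _) hid.integrableOn, setIntegral_const,
        Measure.real, measure_smul_binMean h, sub_self]
  · obtain ⟨hqm, hqc, hqR⟩ := hq
    rw [integral_eq_sum_cells hνsupp hRmeas hRdisj hRcover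
      (integrable_comp_of_cube hνsupp (continuous_val r c) hqm hqc)]
    exact Finset.sum_le_sum fun a _ =>
      measure_mul_val_binMean_le hνsupp r c hqm hqc (hqR a)
  · rw [integral_eq_sum_cells hνsupp hRmeas hRdisj hRcover
      (integrable_comp_of_cube hνsupp (continuous_val r c) hmeas hmaps)]
    refine Finset.sum_congr rfl fun a _ => ?_
    by_cases h : ν (R a) = 0
    · simp [h, Measure.restrict_eq_zero.2 h]
    · rw [setIntegral_congr_fun (hRmeas a)
        (g := fun _ => val r c (binMean ν (R a))) fun v hv => by
          simp only [hqbar_pos a (pos_iff_ne_zero.2 h) v hv],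
        setIntegral_const, Measure.real, smul_eq_mul]
end
end

section
/- Penalized-dual strong duality under ε-approximate calibration: for every ε > 0, V_ε := inf_{q∈Q_ε} ∫ val(q(v)) dν(v) = sup_{λ∈(ℝ^d)^k} { G(λ) − ε Σ_{i=1}^k ‖λ_i‖₂ }, and the supremum on the right-hand side is attained by some λ*_ε. -/
/-!
The result is Lagrangian duality for a convex problem with finitely many constraints and a Slater
point. The Lagrangian of a map `q` at `lam` is `∫ val(q) + ∑ i, lam i ⬝ ∫ h_i (q - id)`.

Since a measurable `q` may be chosen pointwise up to `δ` (`exists_measurable_selection`), the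
infimum of the Lagrangian over all measurable self-maps of the cube is exactly `G lam`
(`dualG_le_lagrangian`, `le_dualG_of_forall`). Weak duality then follows from Cauchy–Schwarz
(`penalized_le_of_mem`).

For the converse, the set of pairs (residuals of `q`, any number above `∫ val(q)`) is convex in the
finite-dimensional space `(ℝ^d)^k × ℝ`, and it misses the open convex set of pairs `(z, t)` with
`‖z_i‖ < ε` and `t < V_ε`. Hahn–Banach separates the two; since `q = id` has zero residuals and
`ε > 0`, the separating functional is not vertical and normalizes to a multiplier
(`exists_multiplier`). The support function of the product of `ε`-balls produces the penalty
`ε ∑ i, ‖lam i‖`. This multiplier is the maximizer, so no compactness argument is needed for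
attainment.
-/

open MeasureTheory

noncomputable section

/-- The dual function
`G(λ) = ∫ min_{p ∈ [0,1]^d} ( val(p) + p ⬝ s_λ(v) ) dν(v) − ∫ v ⬝ s_λ(v) dν(v)`,
where `s_λ(v) = Σ_i h_i(v) λ_i`. -/
def dualG {d k : ℕ} {A : Type*} [Fintype A] [Nonempty A]
    (ν : Measure (Fin d → ℝ)) (r : A → Fin d → ℝ) (c : A → ℝ)
    (hfun : Fin k → (Fin d → ℝ) → ℝ) (lam : Fin k → Fin d → ℝ) : ℝ :=
  (∫ v, sInf ((fun p => val r c p + dot p (∑ i, hfun i v • lam i)) '' cube d) ∂ν)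
    - ∫ v, dot v (∑ i, hfun i v • lam i) ∂ν

/-- The Euclidean (ℓ₂) norm on `ℝ^d`. -/
def l2 {d : ℕ} (x : Fin d → ℝ) : ℝ := Real.sqrt (∑ i, x i ^ 2)

/-- The ε-slack consistency set: measurable `q : [0,1]^d → [0,1]^d` with
`‖∫ h_i(v)(q(v) − v) dν(v)‖₂ ≤ ε` for all `i`. -/
def Qeps {d k : ℕ} (ν : Measure (Fin d → ℝ)) (hfun : Fin k → (Fin d → ℝ) → ℝ)
    (ε : ℝ) : Set ((Fin d → ℝ) → (Fin d → ℝ)) :=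
  {q | Measurable q ∧ (∀ v ∈ cube d, q v ∈ cube d) ∧
    ∀ i, l2 (∫ v, hfun i v • (q v - v) ∂ν) ≤ ε}

/-! ### The cube, the dot product and the Euclidean norm -/

lemma isCompact_cube (d : ℕ) : IsCompact (cube d) := isCompact_Icc

lemma convex_cube (d : ℕ) : Convex ℝ (cube d) := convex_Icc 0 1

lemma cube_nonempty (d : ℕ) : (cube d).Nonempty := ⟨0, le_rfl, zero_le_one⟩

lemma dot_comm' {d : ℕ} (x y : Fin d → ℝ) : dot x y = dot y x := by
  simp [dot, mul_comm]

lemma dot_add_right {d : ℕ} (x y z : Fin d → ℝ) : dot x (y + z) = dot x y + dot x z := by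
  simp [dot, mul_add, Finset.sum_add_distrib]

lemma dot_smul_right {d : ℕ} (a : ℝ) (x y : Fin d → ℝ) : dot x (a • y) = a * dot x y := by
  simp [dot, Finset.mul_sum, mul_left_comm]

lemma dot_sub_left {d : ℕ} (x y z : Fin d → ℝ) : dot (x - y) z = dot x z - dot y z := by
  simp [dot, sub_mul, Finset.sum_sub_distrib]

lemma dot_sum_right {d k : ℕ} (x : Fin d → ℝ) (y : Fin k → Fin d → ℝ) :
    dot x (∑ i, y i) = ∑ i, dot x (y i) := by
  simp only [dot, Finset.sum_apply, Finset.mul_sum]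
  exact Finset.sum_comm

lemma continuous_dot {d : ℕ} :
    Continuous fun z : (Fin d → ℝ) × (Fin d → ℝ) => dot z.1 z.2 := by
  unfold dot; fun_prop

lemma l2_eq_norm {d : ℕ} (x : Fin d → ℝ) : l2 x = ‖WithLp.toLp 2 x‖ := by
  simp [l2, EuclideanSpace.norm_eq]

lemma l2_nonneg {d : ℕ} (x : Fin d → ℝ) : 0 ≤ l2 x := Real.sqrt_nonneg _

lemma l2_zero {d : ℕ} : l2 (0 : Fin d → ℝ) = 0 := by simp [l2]

lemma l2_add_le {d : ℕ} (x y : Fin d → ℝ) : l2 (x + y) ≤ l2 x + l2 y := by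
  simp only [l2_eq_norm, WithLp.toLp_add]
  exact norm_add_le _ _

lemma l2_smul {d : ℕ} (a : ℝ) (x : Fin d → ℝ) : l2 (a • x) = |a| * l2 x := by
  simp only [l2_eq_norm, WithLp.toLp_smul, norm_smul, Real.norm_eq_abs]

lemma continuous_l2 {d : ℕ} : Continuous (l2 : (Fin d → ℝ) → ℝ) := by
  unfold l2; fun_prop

lemma dot_self {d : ℕ} (x : Fin d → ℝ) : dot x x = l2 x ^ 2 := by
  rw [l2, Real.sq_sqrt (Finset.sum_nonneg fun i _ => sq_nonneg _)]
  simp [dot, sq]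

lemma dot_le_l2_mul_l2 {d : ℕ} (x y : Fin d → ℝ) : dot x y ≤ l2 x * l2 y :=
  Real.sum_mul_le_sqrt_mul_sqrt _ _ _

/-! ### The value function and the pointwise inner minimum -/

section Value

variable {d : ℕ} {A : Type*} [Fintype A] [Nonempty A] (r : A → Fin d → ℝ) (c : A → ℝ)

lemma continuous_val_s12 : Continuous (val r c) := by
  unfold val util dot
  exact Continuous.finset_sup'_apply _ fun a _ => by fun_prop

lemma val_convex_comb (p p' : Fin d → ℝ) {a b : ℝ} (ha : 0 ≤ a) (hb : 0 ≤ b) (hab : a + b = 1) :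
    val r c (a • p + b • p') ≤ a * val r c p + b * val r c p' := by
  refine Finset.sup'_le _ _ fun x hx => ?_
  have h1 : util r c x p ≤ val r c p := Finset.le_sup' (fun a => util r c a p) hx
  have h2 : util r c x p' ≤ val r c p' := Finset.le_sup' (fun a => util r c a p') hx
  have h3 : util r c x (a • p + b • p') = a * util r c x p + b * util r c x p' := by
    simp only [util, dot_add_right, dot_smul_right]
    linear_combination (-(c x)) * hab
  rw [h3]
  gcongr

lemma continuous_lagrangian :
    Continuous fun z : (Fin d → ℝ) × (Fin d → ℝ) => val r c z.1 + dot z.1 z.2 :=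
  ((continuous_val_s12 r c).comp continuous_fst).add continuous_dot

/-- The inner minimum `min_{p ∈ [0,1]^d} (val p + p ⬝ s)` as a function of the price `s`. -/
def innerMin (s : Fin d → ℝ) : ℝ := sInf ((fun p => val r c p + dot p s) '' cube d)

lemma continuous_innerMin : Continuous (innerMin r c) := by
  refine IsCompact.continuous_sInf (f := fun s p => val r c p + dot p s) (isCompact_cube d) ?_
  exact (continuous_lagrangian r c).comp continuous_swap

lemma innerMin_le (s : Fin d → ℝ) {p : Fin d → ℝ} (hp : p ∈ cube d) :
    innerMin r c s ≤ val r c p + dot p s := by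
  refine csInf_le ?_ ⟨p, hp, rfl⟩
  exact ((isCompact_cube d).image
    ((continuous_lagrangian r c).comp (Continuous.prodMk_left s))).bddBelow

/-- A measurable `δ`-optimal selection for the inner minimum: scan a dense sequence of the cube
and take the first point that is `δ`-optimal. -/
lemma exists_measurable_selection {δ : ℝ} (hδ : 0 < δ) :
    ∃ g : (Fin d → ℝ) → (Fin d → ℝ), Measurable g ∧ (∀ s, g s ∈ cube d) ∧
      ∀ s, val r c (g s) + dot (g s) s ≤ innerMin r c s + δ := by
  classical
  have : Nonempty (cube d) := (cube_nonempty d).to_subtype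
  let p : ℕ → cube d := TopologicalSpace.denseSeq (cube d)
  have hex : ∀ s : Fin d → ℝ, ∃ n,
      val r c (p n : Fin d → ℝ) + dot (p n : Fin d → ℝ) s < innerMin r c s + δ := by
    intro s
    obtain ⟨_, ⟨x, hx, rfl⟩, hlt⟩ := exists_lt_of_csInf_lt
      ((cube_nonempty d).image fun p => val r c p + dot p s)
      (lt_add_of_pos_right (innerMin r c s) hδ)
    have hopen : IsOpen {y : cube d |
        val r c (y : Fin d → ℝ) + dot (y : Fin d → ℝ) s < innerMin r c s + δ} :=
      isOpen_lt (((continuous_lagrangian r c).comp (Continuous.prodMk_left s)).comp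
        continuous_subtype_val) continuous_const
    obtain ⟨n, hn⟩ := (TopologicalSpace.denseRange_denseSeq (cube d)).exists_mem_open hopen
      ⟨⟨x, hx⟩, hlt⟩
    exact ⟨n, hn⟩
  have hN := measurable_find hex fun n => (isOpen_lt
    ((continuous_lagrangian r c).comp (Continuous.prodMk_right (p n : Fin d → ℝ)))
    ((continuous_innerMin r c).add continuous_const)).measurableSet
  refine ⟨fun s => p (Nat.find (hex s)), ?_, fun s => (p _).2, fun s => (Nat.find_spec (hex s)).le⟩
  exact (measurable_from_nat (f := fun n => (p n : Fin d → ℝ))).comp hN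

end Value

/-! ### Integrability and primal candidates -/

/-- A continuous function of a measurable quantity that stays in a compact set on the cube is
integrable; all integrability claims below are instances of this. -/
lemma integrable_comp_of_compact {d : ℕ} {ν : Measure (Fin d → ℝ)} [IsProbabilityMeasure ν]
    (hν : ν (cube d)ᶜ = 0) {E F : Type*} [TopologicalSpace E] [MeasurableSpace E]
    [OpensMeasurableSpace E]
    [NormedAddCommGroup F] [MeasurableSpace F] [BorelSpace F] [SecondCountableTopology F]
    {K : Set E} (hK : IsCompact K) {f : E → F} (hf : Continuous f) {X : (Fin d → ℝ) → E}
    (hX : Measurable X) (hXK : ∀ v ∈ cube d, X v ∈ K) : Integrable (fun v => f (X v)) ν := by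
  obtain ⟨C, hC⟩ := hK.exists_bound_of_continuousOn hf.continuousOn
  refine Integrable.of_bound (hf.measurable.comp hX).aestronglyMeasurable C ?_
  have h : ∀ᵐ v ∂ν, v ∈ cube d := hν
  filter_upwards [h] with v hv using hC _ (hXK v hv)

/-- The primal candidates: measurable maps sending the cube into itself. -/
def Adm (d : ℕ) : Set ((Fin d → ℝ) → (Fin d → ℝ)) :=
  {q | Measurable q ∧ ∀ v ∈ cube d, q v ∈ cube d}

/-- The calibration residual `∫ h_i(v) (q(v) − v) dν(v)`. -/
def resid {d k : ℕ} (ν : Measure (Fin d → ℝ)) (hfun : Fin k → (Fin d → ℝ) → ℝ)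
    (q : (Fin d → ℝ) → (Fin d → ℝ)) (i : Fin k) : Fin d → ℝ :=
  ∫ v, hfun i v • (q v - v) ∂ν

section Duality

variable {d k : ℕ} {A : Type*} [Fintype A] [Nonempty A]
  {ν : Measure (Fin d → ℝ)} [IsProbabilityMeasure ν] (hν : ν (cube d)ᶜ = 0)
  (r : A → Fin d → ℝ) (c : A → ℝ) {hfun : Fin k → (Fin d → ℝ) → ℝ}
  (hmeas : ∀ i, Measurable (hfun i)) (hbd : ∀ i, ∀ v, |hfun i v| ≤ 1)

include hν

lemma integrable_val {q : (Fin d → ℝ) → (Fin d → ℝ)} (hq : q ∈ Adm d) :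
    Integrable (fun v => val r c (q v)) ν :=
  integrable_comp_of_compact hν (isCompact_cube d) (continuous_val_s12 r c) hq.1 hq.2

include hmeas hbd

lemma integrable_resid {q : (Fin d → ℝ) → (Fin d → ℝ)} (hq : q ∈ Adm d) (i : Fin k) :
    Integrable (fun v => hfun i v • (q v - v)) ν := by
  refine integrable_comp_of_compact hν (E := ℝ × (Fin d → ℝ) × (Fin d → ℝ))
    (K := Set.Icc (-1) 1 ×ˢ (cube d ×ˢ cube d))
    (isCompact_Icc.prod ((isCompact_cube d).prod (isCompact_cube d)))
    (f := fun z => z.1 • (z.2.1 - z.2.2)) (by fun_prop)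
    (X := fun v => (hfun i v, q v, v)) ?_ ?_
  · exact (hmeas i).prodMk (hq.1.prodMk measurable_id)
  · exact fun v hv => ⟨abs_le.1 (hbd i v), hq.2 v hv, hv⟩

omit hν hbd in
lemma measurable_price (lam : Fin k → Fin d → ℝ) :
    Measurable fun v => ∑ i, hfun i v • lam i :=
  Finset.measurable_fun_sum _ fun i _ => (hmeas i).smul_const _

omit hν hmeas in
lemma price_mem (lam : Fin k → Fin d → ℝ) (v : Fin d → ℝ) :
    ∑ i, hfun i v • lam i ∈ Metric.closedBall (0 : Fin d → ℝ) (∑ i, ‖lam i‖) := by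
  rw [mem_closedBall_zero_iff]
  refine norm_sum_le_of_le _ fun i _ => ?_
  rw [norm_smul]
  exact mul_le_of_le_one_left (norm_nonneg _) (hbd i v)

lemma integrable_dot {q : (Fin d → ℝ) → (Fin d → ℝ)} (hq : q ∈ Adm d)
    (lam : Fin k → Fin d → ℝ) :
    Integrable (fun v => dot (q v) (∑ i, hfun i v • lam i)) ν :=
  integrable_comp_of_compact hν
    ((isCompact_cube d).prod (isCompact_closedBall (0 : Fin d → ℝ) (∑ i, ‖lam i‖)))
    continuous_dot (hq.1.prodMk (measurable_price hmeas lam))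
    fun v hv => ⟨hq.2 v hv, price_mem hbd lam v⟩

lemma integrable_innerMin (lam : Fin k → Fin d → ℝ) :
    Integrable (fun v => innerMin r c (∑ i, hfun i v • lam i)) ν :=
  integrable_comp_of_compact hν (isCompact_closedBall (0 : Fin d → ℝ) (∑ i, ‖lam i‖))
    (continuous_innerMin r c) (measurable_price hmeas lam) fun v _ => price_mem hbd lam v

omit hν hmeas hbd [IsProbabilityMeasure ν] in
lemma dualG_eq (lam : Fin k → Fin d → ℝ) :
    dualG ν r c hfun lam = (∫ v, innerMin r c (∑ i, hfun i v • lam i) ∂ν)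
      - ∫ v, dot v (∑ i, hfun i v • lam i) ∂ν := rfl

/-! ### The Lagrangian and weak duality -/

/-- Pricing the residuals of `q` by `lam` is the same as integrating `(q v - v) ⬝ s_lam(v)`. -/
lemma sum_dot_resid {q : (Fin d → ℝ) → (Fin d → ℝ)} (hq : q ∈ Adm d)
    (lam : Fin k → Fin d → ℝ) :
    ∑ i, dot (lam i) (resid ν hfun q i)
      = (∫ v, dot (q v) (∑ i, hfun i v • lam i) ∂ν) - ∫ v, dot v (∑ i, hfun i v • lam i) ∂ν := by
  have hv : Integrable (fun v => dot v (∑ i, hfun i v • lam i)) ν :=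
    integrable_dot hν hmeas hbd (q := fun v => v) ⟨measurable_id, fun v hv => hv⟩ lam
  have hc : ∀ i j, Integrable (fun v => (hfun i v • (q v - v)) j) ν := fun i j =>
    (integrable_resid hν hmeas hbd hq i).eval j
  have h1 : ∀ i, dot (lam i) (resid ν hfun q i)
      = ∫ v, dot (lam i) (hfun i v • (q v - v)) ∂ν := by
    intro i
    simp only [dot]
    rw [integral_finsetSum _ fun j _ => (hc i j).const_mul _]
    refine Finset.sum_congr rfl fun j _ => ?_
    rw [integral_const_mul, resid, eval_integral (hc i)]
  simp only [h1]
  rw [← integral_finsetSum, ← integral_sub (integrable_dot hν hmeas hbd hq lam) hv]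
  · refine integral_congr_ae (Filter.Eventually.of_forall fun v => ?_)
    simp only [dot_sum_right, dot_smul_right]
    rw [← Finset.sum_sub_distrib]
    exact Finset.sum_congr rfl fun i _ => by rw [dot_comm', dot_sub_left, mul_sub]
  · intro i _
    simp only [dot]
    exact integrable_finsetSum _ fun j _ => (hc i j).const_mul _

/-- The dual function bounds the Lagrangian of every candidate from below. -/
lemma dualG_le_lagrangian {q : (Fin d → ℝ) → (Fin d → ℝ)} (hq : q ∈ Adm d)
    (lam : Fin k → Fin d → ℝ) :
    dualG ν r c hfun lam
      ≤ (∫ v, val r c (q v) ∂ν) + ∑ i, dot (lam i) (resid ν hfun q i) := by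
  have hv := integrable_val hν r c hq
  have hd := integrable_dot hν hmeas hbd hq lam
  rw [dualG_eq, sum_dot_resid hν hmeas hbd hq lam, ← add_sub_assoc, ← integral_add hv hd]
  refine sub_le_sub_right (integral_mono_ae (integrable_innerMin hν r c hmeas hbd lam)
    (hv.add hd) ?_) _
  have h : ∀ᵐ v ∂ν, v ∈ cube d := hν
  filter_upwards [h] with v hv using innerMin_le r c _ (hq.2 v hv)

/-- The dual function is the infimum of the Lagrangian over the candidates: the minimum over
maps `q` can be taken pointwise, by measurable selection. -/
lemma le_dualG_of_forall {B : ℝ} (lam : Fin k → Fin d → ℝ)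
    (hB : ∀ q ∈ Adm d, B ≤ (∫ v, val r c (q v) ∂ν) + ∑ i, dot (lam i) (resid ν hfun q i)) :
    B ≤ dualG ν r c hfun lam := by
  refine le_of_forall_pos_le_add fun δ hδ => ?_
  obtain ⟨g, hg, hgc, hgo⟩ := exists_measurable_selection r c hδ
  have hq : (fun v => g (∑ i, hfun i v • lam i)) ∈ Adm d :=
    ⟨hg.comp (measurable_price hmeas lam), fun v _ => hgc _⟩
  refine (hB _ hq).trans ?_
  have hv := integrable_val hν r c hq
  have hd := integrable_dot hν hmeas hbd hq lam
  have hm := integrable_innerMin hν r c hmeas hbd lam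
  rw [dualG_eq, sum_dot_resid hν hmeas hbd hq lam, ← add_sub_assoc, ← integral_add hv hd]
  have := integral_mono (hv.add hd) (hm.add (integrable_const δ)) fun v => hgo _
  rw [integral_add' hm (integrable_const δ)] at this
  simp only [integral_const, probReal_univ, one_smul] at this
  simp only [Pi.add_apply] at this
  linarith

/-- Weak duality, via Cauchy–Schwarz on each residual. -/
lemma penalized_le_of_mem {ε : ℝ} {q : (Fin d → ℝ) → (Fin d → ℝ)} (hq : q ∈ Qeps ν hfun ε)
    (lam : Fin k → Fin d → ℝ) :
    dualG ν r c hfun lam - ε * ∑ i, l2 (lam i) ≤ ∫ v, val r c (q v) ∂ν := by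
  have h1 := dualG_le_lagrangian hν r c hmeas hbd (q := q) ⟨hq.1, hq.2.1⟩ lam
  have h2 : ∑ i, dot (lam i) (resid ν hfun q i) ≤ ε * ∑ i, l2 (lam i) := by
    rw [Finset.mul_sum]
    refine Finset.sum_le_sum fun i _ => (dot_le_l2_mul_l2 _ _).trans ?_
    rw [mul_comm]
    exact mul_le_mul_of_nonneg_right (hq.2.2 i) (l2_nonneg _)
  linarith

omit hν hmeas hbd [IsProbabilityMeasure ν] in
lemma id_mem_Qeps {ε : ℝ} (hε : 0 < ε) : id ∈ Qeps ν hfun ε :=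
  ⟨measurable_id, fun v hv => hv, fun i => by simp [l2_zero, hε.le]⟩

/-! ### Convexity and separation -/

lemma convex_comb_resid {q q' : (Fin d → ℝ) → (Fin d → ℝ)} (hq : q ∈ Adm d) (hq' : q' ∈ Adm d)
    {a b : ℝ} (hab : a + b = 1) :
    resid ν hfun (fun v => a • q v + b • q' v)
      = a • resid ν hfun q + b • resid ν hfun q' := by
  funext i
  have h1 := integrable_resid hν hmeas hbd hq i
  have h2 := integrable_resid hν hmeas hbd hq' i
  simp only [Pi.add_apply, Pi.smul_apply, resid]
  rw [← integral_smul, ← integral_smul, ← integral_add (h1.fun_smul a) (h2.fun_smul b)]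
  refine integral_congr_ae (Filter.Eventually.of_forall fun v => ?_)
  have hb : b = 1 - a := by linarith
  subst hb
  simp only
  module

/-- The upper image `{(z, t) | z = resid q, ∫ val(q) ≤ t}` of the primal problem is convex. -/
lemma convex_upper_image :
    Convex ℝ {x : (Fin k → Fin d → ℝ) × ℝ |
      ∃ q ∈ Adm d, resid ν hfun q = x.1 ∧ ∫ v, val r c (q v) ∂ν ≤ x.2} := by
  rintro ⟨z, t⟩ ⟨q, hq, hz, ht⟩ ⟨z', t'⟩ ⟨q', hq', hz', ht'⟩ a b ha hb hab
  have hmix : (fun v => a • q v + b • q' v) ∈ Adm d :=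
    ⟨(hq.1.const_smul a).add (hq'.1.const_smul b),
      fun v hv => convex_cube d (hq.2 v hv) (hq'.2 v hv) ha hb hab⟩
  refine ⟨_, hmix, ?_, ?_⟩
  · rw [convex_comb_resid hν hmeas hbd hq hq' hab, hz, hz']
    rfl
  · have i1 := integrable_val hν r c hq
    have i2 := integrable_val hν r c hq'
    have := integral_mono (integrable_val hν r c hmix) ((i1.const_mul a).add (i2.const_mul b))
      fun v => val_convex_comb r c (q v) (q' v) ha hb hab
    rw [integral_add' (i1.const_mul a) (i2.const_mul b), integral_const_mul,
      integral_const_mul] at this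
    refine this.trans ?_
    exact add_le_add (mul_le_mul_of_nonneg_left ht ha) (mul_le_mul_of_nonneg_left ht' hb)

omit hν hmeas hbd [IsProbabilityMeasure ν] in
lemma convex_strict_target (ε V : ℝ) :
    Convex ℝ {x : (Fin k → Fin d → ℝ) × ℝ | (∀ i, l2 (x.1 i) < ε) ∧ x.2 < V} := by
  rintro ⟨z, t⟩ ⟨hz, ht⟩ ⟨z', t'⟩ ⟨hz', ht'⟩ a b ha hb hab
  refine ⟨fun i => ?_, convex_Iio V ht ht' ha hb hab⟩
  refine lt_of_le_of_lt (l2_add_le (a • z i) (b • z' i)) ?_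
  rw [l2_smul, l2_smul, abs_of_nonneg ha, abs_of_nonneg hb]
  exact convex_Iio ε (hz i) (hz' i) ha hb hab

omit hν hmeas hbd [IsProbabilityMeasure ν] in
lemma isOpen_strict_target (ε V : ℝ) :
    IsOpen {x : (Fin k → Fin d → ℝ) × ℝ | (∀ i, l2 (x.1 i) < ε) ∧ x.2 < V} := by
  refine IsOpen.and ?_ (isOpen_lt continuous_snd continuous_const)
  simp only [Set.ofPred_forall]
  exact isOpen_iInter_of_finite fun i =>
    isOpen_lt (continuous_l2.comp (by fun_prop)) continuous_const

omit hν hmeas hbd [IsProbabilityMeasure ν] in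
/-- A linear functional on `(ℝ^d)^k × ℝ` in coordinates. -/
lemma functional_repr (f : ((Fin k → Fin d → ℝ) × ℝ) →L[ℝ] ℝ) :
    ∃ (μ : Fin k → Fin d → ℝ) (τ : ℝ), ∀ z t, f (z, t) = ∑ i, dot (μ i) (z i) + τ * t := by
  refine ⟨fun i j => f (Pi.single i (Pi.single j 1), 0), f (0, 1), fun z t => ?_⟩
  have hz : z = ∑ i, ∑ j, z i j • (Pi.single i (Pi.single j 1) : Fin k → Fin d → ℝ) := by
    ext a b
    simp [Finset.sum_apply, Pi.single_apply, apply_ite, ite_apply]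
  have h1 : f (z, 0) = ∑ i, dot (fun j => f (Pi.single i (Pi.single j 1), 0)) (z i) := by
    change (f.comp (ContinuousLinearMap.inl ℝ _ ℝ)) z = _
    conv_lhs => rw [hz]
    simp only [map_sum, map_smul, dot, smul_eq_mul]
    exact Finset.sum_congr rfl fun i _ => Finset.sum_congr rfl fun j _ => mul_comm _ _
  have h2 : f (0, t) = f (0, 1) * t := by
    have : ((0 : Fin k → Fin d → ℝ), t) = t • (0, 1) := by simp
    rw [this, map_smul, smul_eq_mul, mul_comm]
  rw [← h1, ← h2, ← map_add]
  simp

/-- Existence of a multiplier: separating the upper image from the open convex set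
`{‖z_i‖ < ε, t < V}` gives a functional whose `t`-component is positive because the identity map
is strictly feasible. -/
lemma exists_multiplier {ε V : ℝ} (hε : 0 < ε)
    (hV : ∀ q ∈ Qeps ν hfun ε, V ≤ ∫ v, val r c (q v) ∂ν) :
    ∃ lam : Fin k → Fin d → ℝ, ∀ q ∈ Adm d,
      V + ε * ∑ i, l2 (lam i)
        ≤ (∫ v, val r c (q v) ∂ν) + ∑ i, dot (lam i) (resid ν hfun q i) := by
  obtain ⟨f, u, hfD, hfC⟩ := geometric_hahn_banach_open
    (convex_strict_target (k := k) (d := d) ε V) (isOpen_strict_target ε V)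
    (convex_upper_image hν r c hmeas hbd) (by
      rw [Set.disjoint_left]
      rintro ⟨z, t⟩ ⟨hz, ht⟩ ⟨q, hq, rfl, hqt⟩
      exact absurd (hV q ⟨hq.1, hq.2, fun i => (hz i).le⟩) (not_le.2 (hqt.trans_lt ht)))
  obtain ⟨μ, τ, hf⟩ := functional_repr f
  have hC : ∀ q ∈ Adm d, ∀ t, ∫ v, val r c (q v) ∂ν ≤ t →
      u ≤ ∑ i, dot (μ i) (resid ν hfun q i) + τ * t := fun q hq t ht => by
    rw [← hf]; exact hfC (resid ν hfun q, t) ⟨q, hq, rfl, ht⟩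
  have hD : ∀ z : Fin k → Fin d → ℝ, (∀ i, l2 (z i) < ε) → ∀ t < V,
      ∑ i, dot (μ i) (z i) + τ * t < u := fun z hz t ht => by
    rw [← hf]; exact hfD (z, t) ⟨hz, ht⟩
  have hdot0 : ∀ x : Fin d → ℝ, dot x 0 = 0 := fun x => by simp [dot]
  -- The identity map has zero residuals; comparing it with points `(0, t)`, `t < V`, forces `τ > 0`.
  have hτ : 0 < τ := by
    set T := ∫ v, val r c (id v) ∂ν with hT
    have h1 := hC id ⟨measurable_id, fun v hv => hv⟩ T le_rfl
    have h0 : ∀ i, resid ν hfun id i = 0 := fun i => by simp [resid]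
    have h2 := hD 0 (fun i => by simpa [l2_zero] using hε) (min (V - 1) (T - 1))
      (lt_of_le_of_lt (min_le_left _ _) (by linarith))
    simp only [h0, hdot0, Finset.sum_const_zero, zero_add, Pi.zero_apply] at h1 h2
    have h3 := min_le_right (V - 1) (T - 1)
    by_contra! hneg
    nlinarith
  -- The maximizer of `∑ i, μ i ⬝ z i` over the product of `ε`-balls; division by zero makes
  -- `z i = 0` when `μ i = 0`.
  let z : Fin k → Fin d → ℝ := fun i => (ε / l2 (μ i)) • μ i
  have hz : ∀ i, l2 (z i) ≤ ε := fun i => by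
    simp only [z, l2_smul]
    rw [abs_of_nonneg (div_nonneg hε.le (l2_nonneg _))]
    by_cases h : l2 (μ i) = 0
    · simp [h, hε.le]
    · rw [div_mul_cancel₀ _ h]
  have hμz : ∀ i, dot (μ i) (z i) = ε * l2 (μ i) := fun i => by
    simp only [z, dot_smul_right, dot_self]
    by_cases h : l2 (μ i) = 0
    · simp [h]
    · field_simp
  -- `(z, V)` is a limit of points of the open set.
  have hsup : ε * ∑ i, l2 (μ i) + τ * V ≤ u := by
    have hlim : Filter.Tendsto
        (fun θ : ℝ => θ * (ε * ∑ i, l2 (μ i)) + τ * (V - (1 - θ))) (nhdsWithin 1 (Set.Iio 1))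
        (nhds (1 * (ε * ∑ i, l2 (μ i)) + τ * (V - (1 - 1)))) :=
      Continuous.continuousWithinAt (f := fun θ : ℝ =>
        θ * (ε * ∑ i, l2 (μ i)) + τ * (V - (1 - θ))) (by fun_prop)
    have hev : ∀ᶠ θ : ℝ in nhdsWithin 1 (Set.Iio 1),
        θ * (ε * ∑ i, l2 (μ i)) + τ * (V - (1 - θ)) ≤ u := by
      filter_upwards [Ioo_mem_nhdsLT (zero_lt_one (α := ℝ))] with θ hθ
      have := hD (θ • z) (fun i => by
        rw [Pi.smul_apply, l2_smul, abs_of_pos hθ.1]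
        nlinarith [hz i, hθ.1, hθ.2]) (V - (1 - θ)) (by linarith [hθ.2])
      simp only [Pi.smul_apply, dot_smul_right, hμz, ← Finset.mul_sum] at this
      exact this.le
    have := le_of_tendsto hlim hev
    simpa using this
  refine ⟨fun i => τ⁻¹ • μ i, fun q hq => ?_⟩
  have h := hsup.trans (hC q hq _ le_rfl)
  have e1 : ∑ i, l2 (τ⁻¹ • μ i) = τ⁻¹ * ∑ i, l2 (μ i) := by
    simp only [l2_smul, abs_of_pos (inv_pos.2 hτ), Finset.mul_sum]
  have e2 : ∑ i, dot (τ⁻¹ • μ i) (resid ν hfun q i)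
      = τ⁻¹ * ∑ i, dot (μ i) (resid ν hfun q i) := by
    rw [Finset.mul_sum]
    refine Finset.sum_congr rfl fun i _ => ?_
    rw [dot_comm', dot_smul_right, dot_comm']
  rw [e1, e2]
  have := mul_le_mul_of_nonneg_left h (inv_pos.2 hτ).le
  have hc : τ⁻¹ * τ = 1 := inv_mul_cancel₀ hτ.ne'
  linear_combination this + ((∫ v, val r c (q v) ∂ν) - V) * hc

end Duality

/-! ### Strong duality -/

/-- penalized-dual strong duality under ε-approximate calibration:
for every `ε > 0`,
`inf_{q∈Q_ε} ∫ val(q(v)) dν = sup_λ { G(λ) − ε Σ_i ‖λ_i‖₂ }`, attained at some `λ*_ε`. -/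
theorem eps_penalized_strong_duality {d k : ℕ} {A : Type*} [Fintype A] [Nonempty A]
    (ν : Measure (Fin d → ℝ)) [IsProbabilityMeasure ν]
    (hνsupp : ν (cube d)ᶜ = 0)
    (r : A → Fin d → ℝ) (c : A → ℝ)
    (hfun : Fin k → (Fin d → ℝ) → ℝ)
    (hmeas : ∀ i, Measurable (hfun i))
    (hbd : ∀ i, ∀ v, |hfun i v| ≤ 1)
    (ε : ℝ) (hε : 0 < ε) :
    ∃ lamstar : Fin k → Fin d → ℝ,
      (∀ lam : Fin k → Fin d → ℝ,
        dualG ν r c hfun lam - ε * ∑ i, l2 (lam i)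
          ≤ dualG ν r c hfun lamstar - ε * ∑ i, l2 (lamstar i)) ∧
      ((⨅ q : Qeps ν hfun ε, ∫ v, val r c (q.1 v) ∂ν)
        = dualG ν r c hfun lamstar - ε * ∑ i, l2 (lamstar i)) := by
  have hV : ∀ q ∈ Qeps ν hfun ε,
      (⨅ q : Qeps ν hfun ε, ∫ v, val r c (q.1 v) ∂ν) ≤ ∫ v, val r c (q v) ∂ν := fun q hq =>
    ciInf_le (f := fun q : Qeps ν hfun ε => ∫ v, val r c (q.1 v) ∂ν)
      ⟨dualG ν r c hfun 0 - ε * ∑ i, l2 ((0 : Fin k → Fin d → ℝ) i), by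
        rintro _ ⟨p, rfl⟩
        exact penalized_le_of_mem hνsupp r c hmeas hbd p.2 0⟩ ⟨q, hq⟩
  have : Nonempty (Qeps ν hfun ε) := ⟨⟨id, id_mem_Qeps hε⟩⟩
  have hweak : ∀ lam : Fin k → Fin d → ℝ, dualG ν r c hfun lam - ε * ∑ i, l2 (lam i)
      ≤ ⨅ q : Qeps ν hfun ε, ∫ v, val r c (q.1 v) ∂ν := fun lam =>
    le_ciInf fun q => penalized_le_of_mem hνsupp r c hmeas hbd q.2 lam
  obtain ⟨lam, hlam⟩ := exists_multiplier hνsupp r c hmeas hbd hε hV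
  have hstrong := le_sub_iff_add_le.2 (le_dualG_of_forall hνsupp r c hmeas hbd lam hlam)
  exact ⟨lam, fun lam' => (hweak lam').trans hstrong, le_antisymm hstrong (hweak lam)⟩
end
end

section
/- Approximate best-response invariance: let q : [0,1]^d → [0,1]^d be measurable with ‖∫_{R_a} (q(v) − v) dν(v)‖₂ ≤ ε for every a ∈ A. Then ∫ u(a_BR(v), q(v)) dν(v) ≥ ∫ u(a_BR(v), v) dν(v) − |A|·L·ε, where L = max_{a∈A} ‖r_a‖₂. -/
/-!
On each cell `R a` the best-response policy is the constant `a`, so both expected utilities split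
as sums over the cells (`integral_util_eq_sum`). Since `u(a, ·)` is affine, the two contributions
of `R a` differ by `r_a · ∫_{R a} (q v - v) dν` (`setIntegral_util_sub`), which by
Cauchy–Schwarz and the calibration bound is at most `L * ε` in absolute value. Summing over the
`|A|` cells gives the claim.
-/

open MeasureTheory

noncomputable section

/-- Cauchy–Schwarz. -/
lemma abs_dot_le {d : ℕ} (x y : Fin d → ℝ) : |dot x y| ≤ l2 x * l2 y := by
  unfold dot l2
  rw [← Real.sqrt_sq_eq_abs, ← Real.sqrt_mul (Finset.sum_nonneg fun i _ => sq_nonneg (x i))]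
  exact Real.sqrt_le_sqrt (Finset.sum_mul_sq_le_sq_mul_sq _ _ _)

/-- A measurable self-map of the cube is integrable on every measurable part of the cube,
being bounded by `1` there. -/
lemma integrableOn_of_mapsTo_cube {d : ℕ} (ν : Measure (Fin d → ℝ)) [IsProbabilityMeasure ν]
    {g : (Fin d → ℝ) → (Fin d → ℝ)} (hg : Measurable g)
    (hgcube : ∀ v ∈ cube d, g v ∈ cube d)
    {S : Set (Fin d → ℝ)} (hS : MeasurableSet S) (hSc : S ⊆ cube d) :
    IntegrableOn g S ν := by
  refine Integrable.of_bound hg.aestronglyMeasurable 1 ?_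
  refine (ae_restrict_iff' hS).2 (Filter.Eventually.of_forall fun v hv => ?_)
  have h := hgcube v (hSc hv)
  refine (pi_norm_le_iff_of_nonneg zero_le_one).2 fun i => ?_
  rw [Real.norm_eq_abs, abs_of_nonneg (h.1 i)]
  exact h.2 i

lemma integrableOn_util {d : ℕ} {A : Type*} {ν : Measure (Fin d → ℝ)} [IsProbabilityMeasure ν]
    (r : A → Fin d → ℝ) (c : A → ℝ) (a : A) {g : (Fin d → ℝ) → (Fin d → ℝ)}
    {S : Set (Fin d → ℝ)} (hg : IntegrableOn g S ν) :
    IntegrableOn (fun v => util r c a (g v)) S ν := by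
  unfold util dot
  exact (integrable_finsetSum _ fun i _ => (Integrable.eval hg i).const_mul _).add
    (integrable_const _)

/-- An action policy that is constant on each cell of a finite partition of the cube has
expected utility equal to the sum of the contributions of the cells. -/
lemma integral_util_eq_sum {d : ℕ} {A : Type*} [Fintype A]
    {ν : Measure (Fin d → ℝ)} [IsProbabilityMeasure ν]
    (hνsupp : ν (cube d)ᶜ = 0) (r : A → Fin d → ℝ) (c : A → ℝ)
    {R : A → Set (Fin d → ℝ)} (hRmeas : ∀ a, MeasurableSet (R a))
    (hRdisj : ∀ a a' : A, a ≠ a' → Disjoint (R a) (R a'))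
    (hRcover : (⋃ a : A, R a) = cube d)
    {aBR : (Fin d → ℝ) → A} (haBR : ∀ a, ∀ v ∈ R a, aBR v = a)
    {g : (Fin d → ℝ) → (Fin d → ℝ)} (hg : ∀ a, IntegrableOn g (R a) ν) :
    ∫ v, util r c (aBR v) (g v) ∂ν = ∑ a, ∫ v in R a, util r c a (g v) ∂ν := by
  have hcell : ∀ a, Set.EqOn (fun v => util r c (aBR v) (g v))
      (fun v => util r c a (g v)) (R a) := fun a v hv => by
    simp only [haBR a v hv]
  have hfull : ν.restrict (cube d) = ν := Measure.restrict_eq_self_of_ae_mem hνsupp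
  conv_lhs => rw [← hfull, ← hRcover]
  rw [integral_iUnion_fintype hRmeas (fun a a' h => hRdisj a a' h) fun a =>
    (integrableOn_util r c a (hg a)).congr_fun (hcell a).symm (hRmeas a)]
  exact Finset.sum_congr rfl fun a _ => setIntegral_congr_fun (hRmeas a) (hcell a)

/-- Affinity of `u(a, ·)`: the constant `c a` cancels, and the linear part commutes with the
integral. -/
lemma setIntegral_util_sub {d : ℕ} {A : Type*} {ν : Measure (Fin d → ℝ)}
    [IsProbabilityMeasure ν] (r : A → Fin d → ℝ) (c : A → ℝ) (a : A)
    {f g : (Fin d → ℝ) → (Fin d → ℝ)} {S : Set (Fin d → ℝ)}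
    (hf : IntegrableOn f S ν) (hg : IntegrableOn g S ν) :
    ∫ v in S, util r c a (f v) ∂ν - ∫ v in S, util r c a (g v) ∂ν
      = dot (r a) (∫ v in S, (f v - g v) ∂ν) := by
  have hfg : Integrable (fun v => f v - g v) (ν.restrict S) := hf.sub hg
  rw [← integral_sub (integrableOn_util r c a hf) (integrableOn_util r c a hg)]
  unfold util dot
  simp_rw [eval_integral (fun i => Integrable.eval hfg i), ← integral_const_mul]
  rw [← integral_finsetSum _ fun i _ => (Integrable.eval hfg i).const_mul _]
  refine integral_congr_ae (Filter.Eventually.of_forall fun v => ?_)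
  simp only [Pi.sub_apply, mul_sub, Finset.sum_sub_distrib]
  ring

/-- approximate best-response invariance: if
`‖∫_{R_a} (q(v) − v) dν(v)‖₂ ≤ ε` for every `a ∈ A`, then
`∫ u(a_BR(v), q(v)) dν ≥ ∫ u(a_BR(v), v) dν − |A| L ε`, with `L = max_a ‖r_a‖₂`. -/
theorem approximate_best_response_invariance {d : ℕ} {A : Type*}
    [Fintype A] [Nonempty A] [MeasurableSpace A]
    (ν : Measure (Fin d → ℝ)) [IsProbabilityMeasure ν]
    (hνsupp : ν (cube d)ᶜ = 0)
    (r : A → Fin d → ℝ) (c : A → ℝ)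
    (R : A → Set (Fin d → ℝ))
    (hRmeas : ∀ a, MeasurableSet (R a))
    (hRbest : ∀ a, ∀ v ∈ R a, ∀ a' : A, util r c a' v ≤ util r c a v)
    (hRdisj : ∀ a a' : A, a ≠ a' → Disjoint (R a) (R a'))
    (hRcover : (⋃ a : A, R a) = cube d)
    (aBR : (Fin d → ℝ) → A) (haBRmeas : Measurable aBR)
    (haBR : ∀ a, ∀ v ∈ R a, aBR v = a)
    (ε : ℝ) (hε : 0 ≤ ε)
    (q : (Fin d → ℝ) → (Fin d → ℝ)) (hq : Measurable q)
    (hqcube : ∀ v ∈ cube d, q v ∈ cube d)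
    (hcal : ∀ a : A, l2 (∫ v in R a, (q v - v) ∂ν) ≤ ε) :
    (∫ v, util r c (aBR v) v ∂ν)
        - (Fintype.card A : ℝ)
            * (Finset.univ.sup' Finset.univ_nonempty fun a => l2 (r a)) * ε
      ≤ ∫ v, util r c (aBR v) (q v) ∂ν := by
  have hsub : ∀ a, R a ⊆ cube d := fun a => hRcover ▸ Set.subset_iUnion R a
  have hqi : ∀ a, IntegrableOn q (R a) ν := fun a =>
    integrableOn_of_mapsTo_cube ν hq hqcube (hRmeas a) (hsub a)
  have hidi : ∀ a, IntegrableOn (fun v => v) (R a) ν := fun a =>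
    integrableOn_of_mapsTo_cube ν measurable_id (fun _ h => h) (hRmeas a) (hsub a)
  rw [integral_util_eq_sum hνsupp r c hRmeas hRdisj hRcover haBR hqi,
    integral_util_eq_sum hνsupp r c hRmeas hRdisj hRcover haBR hidi]
  set L := Finset.univ.sup' Finset.univ_nonempty fun a => l2 (r a) with hL
  have hcell : ∀ a, ∫ v in R a, util r c a v ∂ν - L * ε
      ≤ ∫ v in R a, util r c a (q v) ∂ν := fun a => by
    have hdiff := setIntegral_util_sub r c a (hqi a) (hidi a)
    have hLa : l2 (r a) ≤ L := Finset.le_sup' (fun a => l2 (r a)) (Finset.mem_univ a)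
    have hCS := (abs_dot_le (r a) (∫ v in R a, (q v - v) ∂ν)).trans
      (mul_le_mul hLa (hcal a) (l2_nonneg _) ((l2_nonneg _).trans hLa))
    have := (abs_le.1 hCS).1
    linarith
  have hsum := Finset.sum_le_sum fun a (_ : a ∈ Finset.univ) => hcell a
  rw [Finset.sum_sub_distrib, Finset.sum_const, Finset.card_univ, nsmul_eq_mul,
    ← mul_assoc] at hsum
  exact hsum
end
end
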